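/- Let Q be a positive-definite quadratic form on ℝ^r, let a ∈ ℤ^r be a nonzero vector, let P(x₀, x₁, …, x_r) be a polynomial, and let N > 0. Suppose f : ℕ × ℤ^r → ℝ satisfies f(n, v) = exp(-Q(v)/(2n))·P(n^{-1/2}, n^{-1/2}v) + o(n^{-N}) uniformly in v as n → ∞. Then there exists a polynomial P'(x₀, x₁, …, x_r) such that f(n, v + a) − f(n, v) = n^{-1/2}·exp(-Q(v)/(2n))·P'(n^{-1/2}, n^{-1/2}v) + o(n^{-N}) uniformly in v, and moreover deg P'(0, x₁, …, x_r) = 1 + deg P(0, x₁, …, x_r). -/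

import Mathlib

open Filter Asymptotics MvPolynomial

/-- The restriction `P(0, x₁, …, x_r)` of a polynomial in `x₀, x₁, …, x_r`. -/
noncomputable def restrictAtZero (r : ℕ) (P : MvPolynomial (Fin (r + 1)) ℝ) :
    MvPolynomial (Fin r) ℝ :=
  MvPolynomial.aeval (Fin.cons 0 fun i : Fin r => MvPolynomial.X i) P

lemma aux_expBound (x : ℝ) (n : ℕ) :
    |Real.exp x - ∑ m ∈ Finset.range n, x ^ m / (m.factorial : ℝ)| ≤ |x| ^ n * Real.exp |x| := by
  have h := Complex.norm_exp_sub_sum_le_norm_mul_exp (x : ℂ) n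
  have e : Complex.exp (x : ℂ) - ∑ m ∈ Finset.range n, (x : ℂ) ^ m / (m.factorial : ℂ)
      = ((Real.exp x - ∑ m ∈ Finset.range n, x ^ m / (m.factorial : ℝ) : ℝ) : ℂ) := by
    push_cast; rfl
  rw [e, Complex.norm_real, Complex.norm_real] at h
  simpa [Real.norm_eq_abs] using h

lemma aux_polyBound {m : ℕ} (P : MvPolynomial (Fin m) ℝ) :
    ∃ C D : ℝ, 0 ≤ C ∧ 0 ≤ D ∧ ∀ y : Fin m → ℝ, |MvPolynomial.eval y P| ≤ C * Real.exp (D * ‖y‖) := by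
  induction P using MvPolynomial.induction_on with
  | C c => exact ⟨|c|, 0, abs_nonneg _, le_rfl, fun y => by simp⟩
  | add p q hp hq =>
    obtain ⟨C1, D1, hC1, hD1, h1⟩ := hp
    obtain ⟨C2, D2, hC2, hD2, h2⟩ := hq
    refine ⟨C1 + C2, D1 + D2, by positivity, by positivity, fun y => ?_⟩
    rw [map_add]
    refine (abs_add_le _ _).trans ?_
    rw [add_mul]
    have hy := norm_nonneg y
    refine add_le_add ((h1 y).trans ?_) ((h2 y).trans ?_)
    · gcongr; linarith
    · gcongr; linarith
  | mul_X p i hp =>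
    obtain ⟨C1, D1, hC1, hD1, h1⟩ := hp
    refine ⟨C1, D1 + 1, hC1, by positivity, fun y => ?_⟩
    rw [map_mul, abs_mul, eval_X, add_mul, Real.exp_add, ← mul_assoc, one_mul]
    have h3 : |y i| ≤ Real.exp ‖y‖ :=
      (norm_le_pi_norm y i).trans (by linarith [Real.add_one_le_exp ‖y‖])
    exact mul_le_mul (h1 y) h3 (abs_nonneg _) (by positivity)

lemma aux_coercive {r : ℕ} (Q : QuadraticForm ℝ (Fin r → ℝ)) (hQ : Q.PosDef) :
    ∃ δ : ℝ, 0 < δ ∧ ∀ x, δ * ‖x‖ ^ 2 ≤ Q x := by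
  have hc : Continuous fun x => Q x := by
    let A : (Fin r → ℝ) →ₗ[ℝ] ((Fin r → ℝ) →L[ℝ] ℝ) :=
      (LinearMap.toContinuousLinearMap.toLinearMap) ∘ₗ (QuadraticMap.associated (R := ℝ) Q)
    have hA : Continuous A := A.continuous_of_finiteDimensional
    have : (fun x => Q x) = fun x => A x x := by
      ext x
      exact (QuadraticMap.associated_eq_self_apply ℝ Q x).symm
    rw [this]
    exact hA.clm_apply continuous_id
  rcases (Metric.sphere (0 : Fin r → ℝ) 1).eq_empty_or_nonempty with he | hne
  · refine ⟨1, one_pos, fun x => ?_⟩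
    have hx : x = 0 := by
      by_contra hx
      have : (‖x‖⁻¹ • x) ∈ Metric.sphere (0 : Fin r → ℝ) 1 := by
        simp [norm_smul, hx]
      rw [he] at this
      exact this
    simp [hx]
  · obtain ⟨y, hy, hmin⟩ := (isCompact_sphere (0 : Fin r → ℝ) 1).exists_isMinOn hne hc.continuousOn
    have hy0 : y ≠ 0 := by
      rintro rfl
      simp at hy
    refine ⟨Q y, hQ y hy0, fun x => ?_⟩
    by_cases hx : x = 0
    · simp [hx]
    have hm : (‖x‖⁻¹ • x) ∈ Metric.sphere (0 : Fin r → ℝ) 1 := by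
      simp [norm_smul, hx]
    have h1 : Q y ≤ Q (‖x‖⁻¹ • x) := hmin hm
    have h2 : Q x = ‖x‖ ^ 2 * Q (‖x‖⁻¹ • x) := by
      have hx' : ‖x‖ ≠ 0 := norm_ne_zero_iff.2 hx
      rw [QuadraticMap.map_smul, smul_eq_mul]
      field_simp
    rw [h2, mul_comm]
    gcongr

lemma aux_derivDegree {m : ℕ} (b : Fin m → ℝ) (p : MvPolynomial (Fin m) ℝ) :
    (MvPolynomial.mkDerivation ℝ (fun i => (C (b i) : MvPolynomial (Fin m) ℝ)) p).totalDegree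
      ≤ p.totalDegree := by
  conv_lhs => rw [p.as_sum]
  rw [map_sum]
  refine totalDegree_finsetSum_le fun s hs => ?_
  rw [mkDerivation_monomial]
  refine (totalDegree_smul_le _ _).trans ?_
  refine totalDegree_finsetSum_le fun i hi => ?_
  simp only [smul_eq_mul]
  refine (totalDegree_mul _ _).trans ?_
  rw [totalDegree_C, add_zero]
  refine (totalDegree_monomial_le _ _).trans ?_
  refine le_trans ?_ (le_totalDegree hs)
  have : s - Finsupp.single i 1 ≤ s := tsub_le_self
  exact Finsupp.degree_mono this

lemma aux_restrict_C (r : ℕ) (c : ℝ) : restrictAtZero r (C c) = C c := by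
  simp [restrictAtZero]

lemma aux_restrict_X0 (r : ℕ) : restrictAtZero r (X 0) = 0 := by
  simp [restrictAtZero]

lemma aux_restrict_Xs (r : ℕ) (i : Fin r) : restrictAtZero r (X i.succ) = X i := by
  simp [restrictAtZero]

lemma aux_restrict_add (r : ℕ) (p q) :
    restrictAtZero r (p + q) = restrictAtZero r p + restrictAtZero r q := by
  simp [restrictAtZero]

lemma aux_restrict_sub (r : ℕ) (p q) :
    restrictAtZero r (p - q) = restrictAtZero r p - restrictAtZero r q := by
  simp [restrictAtZero]

lemma aux_restrict_mul (r : ℕ) (p q) :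
    restrictAtZero r (p * q) = restrictAtZero r p * restrictAtZero r q := by
  simp [restrictAtZero]

/-- The shifted polynomial, first order expansion. -/
lemma aux_shift (r : ℕ) (b : Fin r → ℝ) (P : MvPolynomial (Fin (r + 1)) ℝ) :
    ∃ R : MvPolynomial (Fin (r + 1)) ℝ,
      (∀ (s : ℝ) (x : Fin r → ℝ), eval (Fin.cons s (x + s • b) : Fin (r + 1) → ℝ) P
        = eval (Fin.cons s x : Fin (r + 1) → ℝ) P + s * eval (Fin.cons s x : Fin (r + 1) → ℝ) R) ∧
      restrictAtZero r R = mkDerivation ℝ (fun i => (C (b i) : MvPolynomial (Fin r) ℝ))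
        (restrictAtZero r P) := by
  induction P using MvPolynomial.induction_on with
  | C c =>
    refine ⟨0, fun s x => by simp, ?_⟩
    rw [aux_restrict_C, derivation_C]
    simp [restrictAtZero]
  | add p q hp hq =>
    obtain ⟨R1, h1, h1'⟩ := hp
    obtain ⟨R2, h2, h2'⟩ := hq
    refine ⟨R1 + R2, fun s x => ?_, ?_⟩
    · rw [map_add, map_add, map_add, h1, h2]; ring
    · rw [aux_restrict_add, aux_restrict_add, map_add, h1', h2']
  | mul_X p j hp =>
    obtain ⟨R, h, h'⟩ := hp
    refine Fin.cases ?_ (fun i => ?_) j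
    · refine ⟨R * X 0, fun s x => ?_, ?_⟩
      · simp only [map_mul, h, eval_X, Fin.cons_zero]; ring
      · simp [aux_restrict_mul, aux_restrict_X0]
    · refine ⟨R * X i.succ + C (b i) * p + C (b i) * X 0 * R, fun s x => ?_, ?_⟩
      · simp only [map_mul, map_add, h, eval_X, eval_C, Fin.cons_zero, Fin.cons_succ, Pi.add_apply,
          Pi.smul_apply, smul_eq_mul]; ring
      · simp only [aux_restrict_mul, aux_restrict_add, aux_restrict_X0, aux_restrict_Xs,
          aux_restrict_C, Derivation.leibniz, mkDerivation_X, h', smul_eq_mul]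
        ring

/-- First order expansion of the Taylor polynomial of the exponential. -/
lemma aux_taylor (r K : ℕ) (B : MvPolynomial (Fin (r + 1)) ℝ) (c : ℝ) :
    ∃ W : MvPolynomial (Fin (r + 1)) ℝ, ∀ y : Fin (r + 1) → ℝ,
      ∑ k ∈ Finset.range (K + 2), (-(y 0 * (eval y B + y 0 * c))) ^ k / (k.factorial : ℝ)
        = 1 - y 0 * eval y B + y 0 ^ 2 * eval y W := by
  refine ⟨∑ k ∈ Finset.range K, C (((k + 2).factorial : ℝ)⁻¹) * (B + X 0 * C c) ^ 2 *
    (-(X 0 * (B + X 0 * C c))) ^ k - C c, fun y => ?_⟩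
  rw [Finset.sum_range_succ', Finset.sum_range_succ']
  simp only [map_sub, map_sum, map_mul, map_pow, map_add, map_neg, eval_X, eval_C, mul_sub,
    Finset.mul_sum]
  have : ∀ k ∈ Finset.range K,
      (-(y 0 * (eval y B + y 0 * c))) ^ (k + 1 + 1) / ((k + 1 + 1).factorial : ℝ)
      = y 0 ^ 2 * (((k + 2).factorial : ℝ)⁻¹ * (eval y B + y 0 * c) ^ 2 *
        (-(y 0 * (eval y B + y 0 * c))) ^ k) := by
    intro k _
    rw [div_eq_mul_inv]
    ring
  rw [Finset.sum_congr rfl this]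
  simp
  ring

lemma aux_bound (r : ℕ) (Q : QuadraticForm ℝ (Fin r → ℝ)) (hQ : Q.PosDef)
    (l : (Fin r → ℝ) →ₗ[ℝ] ℝ) (c : ℝ) (hc : 0 ≤ c) (b : Fin r → ℝ)
    (P : MvPolynomial (Fin (r + 1)) ℝ) (K : ℕ) :
    ∃ M : ℝ, 0 ≤ M ∧ ∀ (s : ℝ) (x : Fin r → ℝ), 0 ≤ s → s ≤ 1 →
      Real.exp (-Q x / 2) * (|Real.exp (-(s * (l x + s * c))) -
        ∑ k ∈ Finset.range K, (-(s * (l x + s * c))) ^ k / (k.factorial : ℝ)|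
        * |eval (Fin.cons s (x + s • b) : Fin (r + 1) → ℝ) P|) ≤ M * s ^ K := by
  obtain ⟨δ, hδ, hco⟩ := aux_coercive Q hQ
  obtain ⟨C0, D, hC0, hD, hP⟩ := aux_polyBound P
  have hl : ∀ x, |l x| ≤ ‖LinearMap.toContinuousLinearMap l‖ * ‖x‖ := fun x =>
    (LinearMap.toContinuousLinearMap l).le_opNorm x
  set L := ‖LinearMap.toContinuousLinearMap l‖ with hL
  have hL0 : 0 ≤ L := norm_nonneg _
  refine ⟨K.factorial * C0 * Real.exp (2 * c + D * (1 + ‖b‖) + (2 * L + D) ^ 2 / (2 * δ)),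
    by positivity, fun s x hs0 hs1 => ?_⟩
  set t := ‖x‖ with ht
  have ht0 : 0 ≤ t := norm_nonneg _
  have hw : |-(s * (l x + s * c))| ≤ s * (L * t + c) := by
    rw [abs_neg, abs_mul, abs_of_nonneg hs0]
    gcongr
    refine (abs_add_le _ _).trans (add_le_add (hl x) ?_)
    rw [abs_of_nonneg (by positivity)]
    nlinarith
  have hw1 : |-(s * (l x + s * c))| ≤ L * t + c :=
    hw.trans (mul_le_of_le_one_left (by positivity) hs1)
  have h1 : |Real.exp (-(s * (l x + s * c))) -
        ∑ k ∈ Finset.range K, (-(s * (l x + s * c))) ^ k / (k.factorial : ℝ)|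
      ≤ s ^ K * (K.factorial * Real.exp (L * t + c)) * Real.exp (L * t + c) := by
    refine (aux_expBound _ K).trans ?_
    have h3 : (L * t + c) ^ K ≤ K.factorial * Real.exp (L * t + c) := by
      have := Real.pow_div_factorial_le_exp (x := L * t + c) (by positivity) K
      rw [div_le_iff₀ (by positivity)] at this
      linarith
    have h4 : |-(s * (l x + s * c))| ^ K ≤ s ^ K * (K.factorial * Real.exp (L * t + c)) := by
      refine (pow_le_pow_left₀ (abs_nonneg _) hw K).trans ?_
      rw [mul_pow]
      gcongr
    exact mul_le_mul h4 (Real.exp_le_exp.2 hw1) (Real.exp_pos _).le (by positivity)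
  have h2 : |eval (Fin.cons s (x + s • b) : Fin (r + 1) → ℝ) P|
      ≤ C0 * Real.exp (D * (1 + t + ‖b‖)) := by
    refine (hP _).trans ?_
    gcongr
    rw [pi_norm_le_iff_of_nonneg (by positivity)]
    intro i
    refine Fin.cases ?_ (fun i => ?_) i
    · simp only [Fin.cons_zero, Real.norm_eq_abs, abs_of_nonneg hs0]
      linarith [norm_nonneg b]
    · simp only [Fin.cons_succ]
      refine (norm_le_pi_norm (x + s • b) i).trans ((norm_add_le _ _).trans ?_)
      rw [norm_smul, Real.norm_eq_abs, abs_of_nonneg hs0]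
      nlinarith [norm_nonneg b]
  have h5 : Real.exp (-Q x / 2) ≤ Real.exp (-(δ * t ^ 2) / 2) := by
    apply Real.exp_le_exp.2
    linarith [hco x]
  calc _ ≤ Real.exp (-(δ * t ^ 2) / 2) *
        ((s ^ K * (K.factorial * Real.exp (L * t + c)) * Real.exp (L * t + c)) *
          (C0 * Real.exp (D * (1 + t + ‖b‖)))) := by
        gcongr
    _ = K.factorial * C0 * Real.exp (-(δ * t ^ 2) / 2 + (L * t + c) + (L * t + c) +
          D * (1 + t + ‖b‖)) * s ^ K := by
        simp only [Real.exp_add]; ring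
    _ ≤ _ := by
        refine mul_le_mul_of_nonneg_right (mul_le_mul_of_nonneg_left (Real.exp_le_exp.2 ?_)
          (by positivity)) (by positivity)
        have : (2 * L + D) * t - δ * t ^ 2 / 2 ≤ (2 * L + D) ^ 2 / (2 * δ) := by
          rw [le_div_iff₀ (by positivity)]
          nlinarith [sq_nonneg ((2 * L + D) - δ * t)]
        linarith

/-- The algebraic and analytic core. -/
lemma aux_core (r : ℕ) (Q : QuadraticForm ℝ (Fin r → ℝ)) (hQ : Q.PosDef)
    (b : Fin r → ℝ) (hb : b ≠ 0) (P : MvPolynomial (Fin (r + 1)) ℝ) (K : ℕ) :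
    ∃ P' : MvPolynomial (Fin (r + 1)) ℝ,
      (∃ M : ℝ, 0 ≤ M ∧ ∀ (s : ℝ) (x : Fin r → ℝ), 0 ≤ s → s ≤ 1 →
        |Real.exp (-Q (x + s • b) / 2) * eval (Fin.cons s (x + s • b) : Fin (r + 1) → ℝ) P
          - Real.exp (-Q x / 2) * eval (Fin.cons s x : Fin (r + 1) → ℝ) P
          - s * (Real.exp (-Q x / 2) * eval (Fin.cons s x : Fin (r + 1) → ℝ) P')|
          ≤ M * s ^ (K + 2)) ∧
      (restrictAtZero r P' = 0 ↔ restrictAtZero r P = 0) ∧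
      (restrictAtZero r P ≠ 0 →
        (restrictAtZero r P').totalDegree = (restrictAtZero r P).totalDegree + 1) := by
  let l : (Fin r → ℝ) →ₗ[ℝ] ℝ := (1 / 2 : ℝ) • (QuadraticMap.polarBilin Q).flip b
  have hl : ∀ x, l x = QuadraticMap.polar Q x b / 2 := by
    intro x
    simp [l]
    ring
  have hQb : 0 < Q b := hQ b hb
  have hlb : l b = Q b := by
    rw [hl, QuadraticMap.polar_self]
    simp
  set c := Q b / 2 with hcdef
  have hQadd : ∀ (s : ℝ) x, -Q (x + s • b) / 2 = -Q x / 2 + -(s * (l x + s * c)) := by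
    intro s x
    rw [QuadraticMap.map_add (⇑Q), QuadraticMap.polar_smul_right, QuadraticMap.map_smul, hl, hcdef]
    simp only [smul_eq_mul]
    ring
  let B : MvPolynomial (Fin (r + 1)) ℝ := ∑ i, C (l (Pi.single i 1)) * X i.succ
  have hlsum : ∀ x, l x = ∑ i, l (Pi.single i 1) * x i := by
    intro x
    conv_lhs => rw [LinearMap.pi_apply_eq_sum_univ l x]
    refine Finset.sum_congr rfl fun i _ => ?_
    rw [smul_eq_mul, mul_comm]
    congr 2
    ext j
    simp [Pi.single_apply, eq_comm]
  have hB : ∀ (s : ℝ) x, eval (Fin.cons s x : Fin (r + 1) → ℝ) B = l x := by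
    intro s x
    rw [hlsum]
    simp [B]
  let B0 : MvPolynomial (Fin r) ℝ := ∑ i, C (l (Pi.single i 1)) * X i
  have hB0 : restrictAtZero r B = B0 := by
    simp [B, B0, restrictAtZero]
  have hB0ne : B0 ≠ 0 := by
    intro h
    have : eval b B0 = l b := by
      rw [hlsum]
      simp [B0]
    rw [h, hlb] at this
    simp at this
    linarith
  have hB0deg : B0.totalDegree = 1 := by
    refine IsHomogeneous.totalDegree ?_ hB0ne
    refine IsHomogeneous.sum _ _ _ fun i _ => ?_
    simpa using (isHomogeneous_C (Fin r) (l (Pi.single i 1))).mul (isHomogeneous_X ℝ i)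
  obtain ⟨R, hR, hR'⟩ := aux_shift r b P
  obtain ⟨W, hW⟩ := aux_taylor r K B c
  obtain ⟨M, hM0, hM⟩ := aux_bound r Q hQ l c (by positivity) b P (K + 2)
  have hres : restrictAtZero r (R - B * P + X 0 * (W * (P + X 0 * R) - B * R)) =
      mkDerivation ℝ (fun i => (C (b i) : MvPolynomial (Fin r) ℝ)) (restrictAtZero r P)
        - B0 * restrictAtZero r P := by
    rw [aux_restrict_add, aux_restrict_sub, aux_restrict_mul, aux_restrict_mul, aux_restrict_X0,
      hR', hB0]
    ring
  have hdeg : restrictAtZero r P ≠ 0 →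
      (mkDerivation ℝ (fun i => (C (b i) : MvPolynomial (Fin r) ℝ)) (restrictAtZero r P)
        - B0 * restrictAtZero r P).totalDegree = (restrictAtZero r P).totalDegree + 1 := by
    intro h
    have h1 : (-(B0 * restrictAtZero r P)).totalDegree = (restrictAtZero r P).totalDegree + 1 := by
      rw [totalDegree_neg, totalDegree_mul_of_isDomain hB0ne h, hB0deg, add_comm]
    rw [sub_eq_add_neg, totalDegree_add_eq_right_of_totalDegree_lt, h1]
    rw [h1]
    exact Nat.lt_succ_of_le (aux_derivDegree b _)
  refine ⟨R - B * P + X 0 * (W * (P + X 0 * R) - B * R), ⟨M, hM0, fun s x hs0 hs1 => ?_⟩, ?_, ?_⟩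
  · refine le_trans (le_of_eq ?_) (hM s x hs0 hs1)
    have hWs := hW (Fin.cons s x)
    rw [hB, Fin.cons_zero] at hWs
    rw [← abs_mul, ← abs_of_pos (Real.exp_pos (-Q x / 2)), ← abs_mul,
      abs_of_pos (Real.exp_pos (-Q x / 2)), hWs, hQadd, Real.exp_add, hR]
    congr 1
    simp only [map_add, map_sub, map_mul, eval_X, hB, Fin.cons_zero]
    ring
  · rw [hres]
    constructor
    · intro h
      by_contra hne
      have := hdeg hne
      rw [h, totalDegree_zero] at this
      omega
    · intro h
      rw [h]
      simp
  · rw [hres]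
    exact hdeg

/-- Finite-difference step: if `f(n,v) = e^{-Q(v)/2n} P(n^{-1/2}, n^{-1/2} v) + o(n^{-N})`
uniformly in `v`, then the finite difference of `f` in a nonzero integer direction `a`
admits a similar expansion with an extra factor `n^{-1/2}`, and the degree of the
new polynomial at `x₀ = 0` goes up by one (with the zero polynomial having
degree `-∞`, encoded by the vanishing equivalence). -/
theorem stmt0 (r : ℕ) (Q : QuadraticForm ℝ (Fin r → ℝ)) (hQ : Q.PosDef)
    (a : Fin r → ℤ) (ha : a ≠ 0)
    (P : MvPolynomial (Fin (r + 1)) ℝ) (N : ℝ) (hN : 0 < N)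
    (f : ℕ × (Fin r → ℤ) → ℝ)
    (hf : ∃ E : ℕ → ℝ, (E =o[atTop] fun n : ℕ => (n : ℝ) ^ (-N)) ∧
      ∀ n : ℕ, 1 ≤ n → ∀ v : Fin r → ℤ,
        |f (n, v) -
            Real.exp (-Q (fun i => (v i : ℝ)) / (2 * n)) *
              MvPolynomial.eval
                (Fin.cons (Real.sqrt n)⁻¹ fun i => (v i : ℝ) / Real.sqrt n) P|
          ≤ E n) :
    ∃ P' : MvPolynomial (Fin (r + 1)) ℝ,
      (∃ E : ℕ → ℝ, (E =o[atTop] fun n : ℕ => (n : ℝ) ^ (-N)) ∧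
        ∀ n : ℕ, 1 ≤ n → ∀ v : Fin r → ℤ,
          |f (n, v + a) - f (n, v) -
              (Real.sqrt n)⁻¹ *
                (Real.exp (-Q (fun i => (v i : ℝ)) / (2 * n)) *
                  MvPolynomial.eval
                    (Fin.cons (Real.sqrt n)⁻¹ fun i => (v i : ℝ) / Real.sqrt n) P')|
            ≤ E n) ∧
      (restrictAtZero r P' = 0 ↔ restrictAtZero r P = 0) ∧
      (restrictAtZero r P ≠ 0 →
        (restrictAtZero r P').totalDegree = (restrictAtZero r P).totalDegree + 1) := by
  obtain ⟨E, hE, hfE⟩ := hf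
  obtain ⟨K, hK⟩ := exists_nat_gt (2 * N)
  have hb : (fun i => (a i : ℝ)) ≠ 0 := by
    intro h
    apply ha
    ext i
    have := congrFun h i
    simpa using this
  obtain ⟨P', ⟨M, hM0, hM⟩, hP', hdeg⟩ := aux_core r Q hQ (fun i => (a i : ℝ)) hb P K
  refine ⟨P', ⟨fun n => E n + E n + M * (n : ℝ) ^ (-((K : ℝ) + 2) / 2), ?_, ?_⟩, hP', hdeg⟩
  · refine (hE.add hE).add (IsLittleO.const_mul_left ?_ M)
    have h : (fun x : ℝ => x ^ (-((K : ℝ) + 2) / 2)) =o[atTop] fun x : ℝ => x ^ (-N) := by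
      refine (isLittleO_iff_tendsto' ?_).2 ?_
      · filter_upwards [eventually_gt_atTop (0 : ℝ)] with x hx h0
        exact absurd h0 (Real.rpow_pos_of_pos hx _).ne'
      · have := tendsto_rpow_neg_atTop (y := ((K : ℝ) + 2) / 2 - N) (by linarith)
        refine this.congr' ?_
        filter_upwards [eventually_gt_atTop (0 : ℝ)] with x hx
        rw [← Real.rpow_sub hx]
        congr 1
        ring
    exact h.comp_tendsto tendsto_natCast_atTop_atTop
  · intro n hn v
    have hn0 : (0 : ℝ) < n := by exact_mod_cast hn
    have hs1 : (1 : ℝ) ≤ Real.sqrt n := by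
      rw [Real.one_le_sqrt]
      exact_mod_cast hn
    have hs0 : 0 < Real.sqrt n := by linarith
    set s := (Real.sqrt n)⁻¹ with hs
    have hss : s ^ 2 = (n : ℝ)⁻¹ := by
      rw [hs, inv_pow, Real.sq_sqrt hn0.le]
    have hQs : ∀ x : Fin r → ℝ, -Q x / (2 * n) = -Q (s • x) / 2 := by
      intro x
      rw [QuadraticMap.map_smul, smul_eq_mul, ← pow_two, hss]
      field_simp
    have hx : ∀ w : Fin r → ℤ, (fun i => (w i : ℝ) / Real.sqrt n) = s • fun i => (w i : ℝ) := by
      intro w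
      ext i
      simp [hs, div_eq_inv_mul]
    have hpow : (n : ℝ) ^ (-((K : ℝ) + 2) / 2) = s ^ (K + 2) := by
      rw [hs, Real.sqrt_eq_rpow, ← Real.rpow_neg hn0.le, ← Real.rpow_natCast, ← Real.rpow_mul hn0.le]
      congr 1
      push_cast
      ring
    have h1 := hfE n hn (v + a)
    have h2 := hfE n hn v
    have h3 := hM s (s • fun i => (v i : ℝ)) (by positivity) (inv_le_one_of_one_le₀ hs1)
    have hva : (s • fun i => (((v + a) i : ℤ) : ℝ)) =
        (s • fun i => (v i : ℝ)) + s • fun i => (a i : ℝ) := by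
      ext i
      simp [mul_add]
    rw [hx, hQs, hva] at h1
    rw [hx, hQs] at h2 ⊢
    simp only [hpow]
    rw [abs_le] at *
    constructor <;> linarith [h1.1, h1.2, h2.1, h2.2, h3.1, h3.2]
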